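/- arXiv:1710.01223 — 5 statements merged into one kernel-verified Lean document; each statement's English description precedes it below -/
import Mathlib

section
/- Let I : ℝ^n → ℝ, let ∇̄I : ℝ^n × ℝ^n → ℝ^n be a discrete gradient of I, i.e. a map satisfying (∇̄I(v,u))ᵀ(u − v) = I(u) − I(v) for all u, v ∈ ℝ^n, let S̄ ∈ Mat_{n×n}(ℝ) be skew-symmetric, and let Δt ∈ ℝ. If vectors u⁰, u¹ ∈ ℝ^n satisfy the discrete gradient scheme (u¹ − u⁰)/Δt = S̄ ∇̄I(u⁰, u¹), then I(u¹) = I(u⁰); i.e., the discrete gradient method exactly preserves the first integral I. -/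
open Matrix

/-- A discrete gradient method `(u¹ - u⁰)/Δt = S̄ ∇̄I(u⁰, u¹)` with `S̄` skew-symmetric
and `∇̄I` a discrete gradient of `I` exactly preserves the first integral `I`. -/
theorem discrete_gradient_method_preserves_integral {n : ℕ}
    (I : (Fin n → ℝ) → ℝ)
    (DG : (Fin n → ℝ) → (Fin n → ℝ) → (Fin n → ℝ))
    (hDG : ∀ v u : Fin n → ℝ, DG v u ⬝ᵥ (u - v) = I u - I v)
    (S : Matrix (Fin n) (Fin n) ℝ) (hS : Sᵀ = -S)
    (Δt : ℝ) (hΔt : Δt ≠ 0)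
    (u0 u1 : Fin n → ℝ)
    (hscheme : Δt⁻¹ • (u1 - u0) = S *ᵥ DG u0 u1) :
    I u1 = I u0 := by
  -- A skew-symmetric quadratic form vanishes: transposing `gᵀ S g` changes its sign.
  have hskew : DG u0 u1 ⬝ᵥ (S *ᵥ DG u0 u1) = 0 := by
    have h : DG u0 u1 ⬝ᵥ (S *ᵥ DG u0 u1) = -(DG u0 u1 ⬝ᵥ (S *ᵥ DG u0 u1)) := by
      conv_lhs => rw [dotProduct_mulVec, ← mulVec_transpose, hS, neg_mulVec,
        neg_dotProduct, dotProduct_comm]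
    linarith
  rw [← hscheme, dotProduct_smul, hDG, smul_eq_mul] at hskew
  have h := (mul_eq_zero.mp hskew).resolve_left (inv_ne_zero hΔt)
  exact sub_eq_zero.mp h
end

section
/- Let I_old : ℝ^m → ℝ and I_new : ℝ^M → ℝ be functions, let ∇̄I_new be a discrete gradient of I_new (i.e. (∇̄I_new(v,u))ᵀ(u−v) = I_new(u) − I_new(v) for all u,v ∈ ℝ^M), let S̄ ∈ Mat_{M×M}(ℝ) be skew-symmetric, let Δt ∈ ℝ, let u^n ∈ ℝ^m, û ∈ ℝ^M, and let z ∈ ℝ^M. If u^{n+1} ∈ ℝ^M satisfies ⟨∇̄I_new(û, u^{n+1}), z⟩ ≠ 0 together with the corrected adaptive scheme u^{n+1} = û − [(I_new(û) − I_old(u^n)) / ⟨∇̄I_new(û, u^{n+1}), z⟩] z + Δt S̄ ∇̄I_new(û, u^{n+1}), then I_new(u^{n+1}) = I_old(u^n); i.e., the corrected moving-mesh discrete gradient step exactly preserves the approximated first integral across the mesh change even when the transfer û of u^n to the new mesh is non-preserving. -/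
/-!
Pair the scheme with the discrete gradient `g = ∇̄I_new(û, u^{n+1})`. The left side
`⟨g, u^{n+1} - û⟩` is `I_new(u^{n+1}) - I_new(û)`; on the right, the `S̄` term vanishes by
skew-symmetry and the correction term contributes exactly `-(I_new(û) - I_old(uⁿ))`.
-/

open Matrix

/-- The corrected adaptive (moving-mesh) discrete gradient scheme
`u^{n+1} = û - [(I_new(û) - I_old(uⁿ)) / ⟨∇̄I_new(û, u^{n+1}), z⟩] z
          + Δt S̄ ∇̄I_new(û, u^{n+1})`
exactly preserves the approximated first integral across the mesh change:
`I_new(u^{n+1}) = I_old(uⁿ)`. -/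
theorem corrected_adaptive_scheme_preserves_integral {m M : ℕ}
    (Iold : (Fin m → ℝ) → ℝ) (Inew : (Fin M → ℝ) → ℝ)
    (DG : (Fin M → ℝ) → (Fin M → ℝ) → (Fin M → ℝ))
    (hDG : ∀ v u : Fin M → ℝ, DG v u ⬝ᵥ (u - v) = Inew u - Inew v)
    (S : Matrix (Fin M) (Fin M) ℝ) (hS : Sᵀ = -S)
    (Δt : ℝ) (un : Fin m → ℝ) (uhat z : Fin M → ℝ)
    (u1 : Fin M → ℝ)
    (hnz : DG uhat u1 ⬝ᵥ z ≠ 0)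
    (hscheme : u1 = uhat - ((Inew uhat - Iold un) / (DG uhat u1 ⬝ᵥ z)) • z
        + Δt • (S *ᵥ DG uhat u1)) :
    Inew u1 = Iold un := by
  -- By skew-symmetry the quadratic form of `S` equals its own negative.
  have hskew : DG uhat u1 ⬝ᵥ (S *ᵥ DG uhat u1) = 0 := by
    have h : DG uhat u1 ⬝ᵥ (S *ᵥ DG uhat u1) = -(DG uhat u1 ⬝ᵥ (S *ᵥ DG uhat u1)) := by
      conv_lhs => rw [dotProduct_mulVec, ← mulVec_transpose, hS, neg_mulVec, neg_dotProduct,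
        dotProduct_comm]
    linarith
  have hdiff : u1 - uhat = Δt • (S *ᵥ DG uhat u1)
      - ((Inew uhat - Iold un) / (DG uhat u1 ⬝ᵥ z)) • z := by
    rw [sub_eq_iff_eq_add]
    refine hscheme.trans ?_
    abel
  have hI := hDG uhat u1
  rw [hdiff, dotProduct_sub, dotProduct_smul, dotProduct_smul, hskew, smul_zero, smul_eq_mul,
    div_mul_cancel₀ _ hnz] at hI
  linarith
end

section
/- Let A ∈ Mat_{n×n}(ℝ) be symmetric, let D be a totally symmetric tensor with entries D_{ijk} ∈ ℝ, and let H : ℝ^n → ℝ be given by H(u) = ½ Σ_{i,j} A_{ij} u_i u_j + (1/6) Σ_{i,j,k} D_{ijk} u_i u_j u_k. Let ∇̄H(v,u) be the map with components (∇̄H(v,u))_i = ½ Σ_j A_{ij}(v_j + u_j) + (1/6) Σ_{j,k} D_{ijk}( v_j (v_k + ½ u_k) + u_j (½ v_k + u_k) ). Let S ∈ Mat_{n×n}(ℝ) be skew-symmetric and Δt ∈ ℝ. If û, u^{n+1} ∈ ℝ^n satisfy u^{n+1} − û = Δt S ∇̄H(û, u^{n+1}), then H(u^{n+1}) = H(û).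 -/
open Matrix

/-!
A skew-symmetric `S` satisfies `w ⬝ S w = 0`, so pairing the scheme with the discrete gradient gives
`(u¹ - û) ⬝ ∇̄H(û, u¹) = 0`. The theorem then follows from the discrete gradient identity
`(u - v) ⬝ ∇̄H(v, u) = H u - H v`. Written with the bilinear form of `A` and the trilinear form of
`D`, this identity expands to `H u - H v` plus mixed terms, which cancel by the symmetry of `A`
and `D`.
-/

theorem skew_dotProduct_mulVec_self {n : ℕ} (S : Matrix (Fin n) (Fin n) ℝ) (hS : Sᵀ = -S)
    (w : Fin n → ℝ) : w ⬝ᵥ (S *ᵥ w) = 0 := by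
  have h : w ⬝ᵥ (S *ᵥ w) = -(w ⬝ᵥ (S *ᵥ w)) := by
    conv_lhs => rw [dotProduct_mulVec, ← mulVec_transpose, hS, neg_mulVec, neg_dotProduct,
      dotProduct_comm]
  linarith

/-- The bilinear form `∑ A_{ij} aᵢ bⱼ`. -/
def bilinForm {n : ℕ} (A : Matrix (Fin n) (Fin n) ℝ) (a b : Fin n → ℝ) : ℝ :=
  ∑ i, ∑ j, A i j * a i * b j

/-- The trilinear form `∑ D_{ijk} aᵢ bⱼ c_k`. -/
def trilinForm {n : ℕ} (D : Fin n → Fin n → Fin n → ℝ) (a b c : Fin n → ℝ) : ℝ :=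
  ∑ i, ∑ j, ∑ k, D i j k * a i * b j * c k

theorem bilinForm_comm {n : ℕ} (A : Matrix (Fin n) (Fin n) ℝ) (hA : Aᵀ = A)
    (a b : Fin n → ℝ) : bilinForm A a b = bilinForm A b a := by
  unfold bilinForm
  rw [Finset.sum_comm]
  refine Finset.sum_congr rfl fun i _ => Finset.sum_congr rfl fun j _ => ?_
  have h : A j i = A i j := congrFun (congrFun hA i) j
  rw [h]; ring

theorem trilinForm_swap_left {n : ℕ} (D : Fin n → Fin n → Fin n → ℝ)
    (hD : ∀ i j k, D i j k = D j i k) (a b c : Fin n → ℝ) :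
    trilinForm D a b c = trilinForm D b a c := by
  unfold trilinForm
  rw [Finset.sum_comm]
  refine Finset.sum_congr rfl fun i _ => Finset.sum_congr rfl fun j _ =>
    Finset.sum_congr rfl fun k _ => ?_
  rw [hD j i k]; ring

theorem trilinForm_swap_right {n : ℕ} (D : Fin n → Fin n → Fin n → ℝ)
    (hD : ∀ i j k, D i j k = D i k j) (a b c : Fin n → ℝ) :
    trilinForm D a b c = trilinForm D a c b := by
  unfold trilinForm
  refine Finset.sum_congr rfl fun i _ => ?_
  rw [Finset.sum_comm]
  refine Finset.sum_congr rfl fun j _ => Finset.sum_congr rfl fun k _ => ?_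
  rw [hD i k j]; ring

/-- The pairing of `a` with the discrete gradient, expanded by linearity. -/
theorem sum_mul_discreteGradient {n : ℕ} (A : Matrix (Fin n) (Fin n) ℝ)
    (D : Fin n → Fin n → Fin n → ℝ) (a v u : Fin n → ℝ) :
    ∑ i, a i * ((1/2) * ∑ j, A i j * (v j + u j)
      + (1/6) * ∑ j, ∑ k, D i j k *
          (v j * (v k + (1/2) * u k) + u j * ((1/2) * v k + u k)))
    = (1/2) * (bilinForm A a v + bilinForm A a u)
      + (1/6) * (trilinForm D a v v + (1/2) * trilinForm D a v u
        + (1/2) * trilinForm D a u v + trilinForm D a u u) := by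
  unfold bilinForm trilinForm
  simp only [mul_add, Finset.mul_sum, ← Finset.sum_add_distrib]
  refine Finset.sum_congr rfl fun i _ => ?_
  refine Finset.sum_congr rfl fun j _ => ?_
  refine congrArg₂ (· + ·) (by ring) (Finset.sum_congr rfl fun k _ => by ring)

/-- The H²-preserving scheme for the BBM equation: for
`H(u) = ½ Σ A_{ij} uᵢuⱼ + (1/6) Σ D_{ijk} uᵢuⱼu_k` with `A` symmetric, `D` totally
symmetric, the discrete gradient `∇̄H` as given, and `S` skew-symmetric, the step
`u^{n+1} - û = Δt S ∇̄H(û, u^{n+1})` satisfies `H(u^{n+1}) = H(û)`. -/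
theorem bbm_H2_scheme_preserves_H2 {n : ℕ}
    (A : Matrix (Fin n) (Fin n) ℝ) (hA : Aᵀ = A)
    (D : Fin n → Fin n → Fin n → ℝ)
    (hD : ∀ i j k, D i j k = D j i k ∧ D i j k = D i k j)
    (H : (Fin n → ℝ) → ℝ)
    (hH : ∀ u : Fin n → ℝ, H u =
      (1/2) * ∑ i, ∑ j, A i j * u i * u j
      + (1/6) * ∑ i, ∑ j, ∑ k, D i j k * u i * u j * u k)
    (DG : (Fin n → ℝ) → (Fin n → ℝ) → (Fin n → ℝ))
    (hDGdef : ∀ (v u : Fin n → ℝ) (i : Fin n), DG v u i =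
      (1/2) * ∑ j, A i j * (v j + u j)
      + (1/6) * ∑ j, ∑ k, D i j k *
          (v j * (v k + (1/2) * u k) + u j * ((1/2) * v k + u k)))
    (S : Matrix (Fin n) (Fin n) ℝ) (hS : Sᵀ = -S)
    (Δt : ℝ) (uhat u1 : Fin n → ℝ)
    (hscheme : u1 - uhat = Δt • (S *ᵥ DG uhat u1)) :
    H u1 = H uhat := by
  have hzero : ∑ i, (u1 i - uhat i) * DG uhat u1 i = 0 := by
    change (u1 - uhat) ⬝ᵥ DG uhat u1 = 0
    rw [hscheme, smul_dotProduct, dotProduct_comm, skew_dotProduct_mulVec_self S hS, smul_zero]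
  simp only [sub_mul, Finset.sum_sub_distrib, hDGdef, sum_mul_discreteGradient] at hzero
  have hl := trilinForm_swap_left D fun i j k => (hD i j k).1
  have hr := trilinForm_swap_right D fun i j k => (hD i j k).2
  have hHu : ∀ u, H u = (1/2) * bilinForm A u u + (1/6) * trilinForm D u u u := hH
  rw [hHu, hHu]
  linarith [bilinForm_comm A hA u1 uhat, hl u1 uhat uhat, hr uhat u1 uhat,
    hl u1 uhat u1, hr u1 u1 uhat]
end

section
/- Let L > 0 and let u : ℝ × ℝ → ℝ (written u(x,t)) be C³, 2L-periodic in x (u(x+2L, t) = u(x,t) for all x,t, together with all its spatial derivatives), and satisfy the Benjamin–Bona–Mahony equation u_t − u_{xxt} + u_x + u u_x = 0 for all (x,t). Then the Hamiltonian H¹(t) = ½ ∫_{−L}^{L} ( u(x,t)² + u_x(x,t)² ) dx is constant in t. -/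
open MeasureTheory intervalIntegral

/-!
Multiplying the BBM equation by `u` gives the local conservation law
`∂ₜ (u² + u_x²) = ∂ₓ (2 u u_{xt} - u² - (2/3) u³)`: indeed
`u u_t + u_x u_{xt} = u (u_t - u_{xxt}) + ∂ₓ (u u_{xt})`, and the equation turns the first term into
`-(u + u²) u_x`. The interchange `∂ₜ ∂ₓ u_x = ∂ₓ ∂ₜ u_x` is legitimate because `u_x` is `C²`
(`dirDeriv_comm`). The flux is `2L`-periodic in `x`, so the density is conserved; this last step
(`integral_eq_of_conservation_law`) writes the change of the integral as a double integral of the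
time derivative of the density and applies Fubini's theorem, which avoids differentiating under the
integral sign.
-/

/-- The derivative of a function on the `(x, t)`-plane in the direction `v`; the directions `(1, 0)`
and `(0, 1)` give the partial derivatives in `x` and in `t`. -/
noncomputable def dirDeriv (v : ℝ × ℝ) (f : ℝ × ℝ → ℝ) (p : ℝ × ℝ) : ℝ := fderiv ℝ f p v

lemma contDiff_dirDeriv {f : ℝ × ℝ → ℝ} {m n : WithTop ℕ∞} (hf : ContDiff ℝ n f)
    (hmn : m + 1 ≤ n) (v : ℝ × ℝ) : ContDiff ℝ m (dirDeriv v f) :=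
  (hf.fderiv_right hmn).clm_apply contDiff_const

lemma hasDerivAt_fst {f : ℝ × ℝ → ℝ} (hf : Differentiable ℝ f) (x t : ℝ) :
    HasDerivAt (fun y => f (y, t)) (dirDeriv (1, 0) f (x, t)) x :=
  (hf (x, t)).hasFDerivAt.comp_hasDerivAt x ((hasDerivAt_id x).prodMk (hasDerivAt_const x t))

lemma hasDerivAt_snd {f : ℝ × ℝ → ℝ} (hf : Differentiable ℝ f) (x t : ℝ) :
    HasDerivAt (fun s => f (x, s)) (dirDeriv (0, 1) f (x, t)) t :=
  (hf (x, t)).hasFDerivAt.comp_hasDerivAt t ((hasDerivAt_const t x).prodMk (hasDerivAt_id t))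

/-- Symmetry of second derivatives for `C²` functions. -/
lemma dirDeriv_comm {f : ℝ × ℝ → ℝ} (hf : ContDiff ℝ 2 f) (v w : ℝ × ℝ) :
    dirDeriv v (dirDeriv w f) = dirDeriv w (dirDeriv v f) := by
  have hd : Differentiable ℝ (fderiv ℝ f) :=
    (hf.fderiv_right (m := 1) (by norm_num)).differentiable (by norm_num)
  have key : ∀ v w p, dirDeriv v (dirDeriv w f) p = fderiv ℝ (fderiv ℝ f) p v w := by
    intro v w p
    have h := ((hd p).hasFDerivAt.clm_apply (hasFDerivAt_const w p)).fderiv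
    change fderiv ℝ (fun q => fderiv ℝ f q w) p v = _
    rw [h]
    simp
  funext p
  rw [key, key]
  exact (hf.contDiffAt.isSymmSndFDerivAt (by simp)).eq v w

lemma dirDeriv_periodic {f : ℝ × ℝ → ℝ} {a : ℝ × ℝ} (h : ∀ p, f (p + a) = f p) (v p : ℝ × ℝ) :
    dirDeriv v f (p + a) = dirDeriv v f p := by
  unfold dirDeriv
  rw [← fderiv_comp_add_right]
  simp only [h]

/-- If `∂ₜ ρ = g = ∂ₓ φ` and the flux `φ` takes equal values at both ends of `[a, b]`, then
`∫ ρ dx` over `[a, b]` does not depend on time. -/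
lemma integral_eq_of_conservation_law {a b : ℝ} {ρ g φ : ℝ → ℝ → ℝ}
    (hρc : ∀ t, Continuous fun x => ρ x t)
    (hg : Continuous fun p : ℝ × ℝ => g p.1 p.2)
    (hρ : ∀ x t, HasDerivAt (fun s => ρ x s) (g x t) t)
    (hφ : ∀ x t, HasDerivAt (fun y => φ y t) (g x t) x)
    (hends : ∀ t, φ a t = φ b t) (s t : ℝ) :
    ∫ x in a..b, ρ x s = ∫ x in a..b, ρ x t := by
  have hgx : ∀ x, Continuous fun τ => g x τ := fun x =>
    hg.comp (by fun_prop : Continuous fun τ : ℝ => (x, τ))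
  have hgt : ∀ τ, Continuous fun x => g x τ := fun τ =>
    hg.comp (by fun_prop : Continuous fun x : ℝ => (x, τ))
  have hint : ∀ x, ∫ τ in s..t, g x τ = ρ x t - ρ x s := fun x =>
    integral_eq_sub_of_hasDerivAt (fun τ _ => hρ x τ) ((hgx x).intervalIntegrable _ _)
  have hzero : ∀ τ, ∫ x in a..b, g x τ = 0 := fun τ => by
    rw [integral_eq_sub_of_hasDerivAt (fun x _ => hφ x τ) ((hgt τ).intervalIntegrable _ _),
      hends τ, sub_self]
  have hswap : ∫ x in a..b, ∫ τ in s..t, g x τ = ∫ τ in s..t, ∫ x in a..b, g x τ := by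
    apply intervalIntegral_intervalIntegral_swap
    exact (hg.continuousOn.integrableOn_compact
      (isCompact_uIcc.prod isCompact_uIcc)).mono_set
      (Set.prod_mono Set.uIoc_subset_uIcc Set.uIoc_subset_uIcc)
  simp only [hint, hzero, intervalIntegral.integral_zero] at hswap
  rw [integral_sub ((hρc t).intervalIntegrable _ _) ((hρc s).intervalIntegrable _ _)] at hswap
  linarith

/-- For a C³, `2L`-periodic (in `x`) solution `u` of the BBM equation
`u_t - u_{xxt} + u_x + u u_x = 0`, the Hamiltonian
`H¹(t) = ½ ∫_{-L}^{L} (u² + u_x²) dx` is constant in `t`. -/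
theorem bbm_preserves_H1 (L : ℝ) (hL : 0 < L) (u : ℝ → ℝ → ℝ)
    (hu : ContDiff ℝ 3 (fun p : ℝ × ℝ => u p.1 p.2))
    (hper : ∀ x t : ℝ, u (x + 2 * L) t = u x t)
    (hbbm : ∀ x t : ℝ,
      deriv (fun s => u x s) t
      - deriv (fun s => deriv (fun y => deriv (fun y' => u y' s) y) x) t
      + deriv (fun y => u y t) x
      + u x t * deriv (fun y => u y t) x = 0) :
    ∀ s t : ℝ,
      (1/2) * ∫ x in (-L)..L, ((u x s)^2 + (deriv (fun y => u y s) x)^2)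
        = (1/2) * ∫ x in (-L)..L, ((u x t)^2 + (deriv (fun y => u y t) x)^2) := by
  intro s t
  set f : ℝ × ℝ → ℝ := fun p => u p.1 p.2 with hf
  set fx := dirDeriv (1, 0) f with hfx
  set ft := dirDeriv (0, 1) f with hft
  set fxt := dirDeriv (0, 1) fx with hfxt
  have cx : ContDiff ℝ 2 fx := contDiff_dirDeriv hu (by norm_num) _
  have ct : ContDiff ℝ 2 ft := contDiff_dirDeriv hu (by norm_num) _
  have cxx : ContDiff ℝ 1 (dirDeriv (1, 0) fx) := contDiff_dirDeriv cx (by norm_num) _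
  have cxt : ContDiff ℝ 1 fxt := contDiff_dirDeriv cx (by norm_num) _
  have du : Differentiable ℝ f := hu.differentiable (by norm_num)
  have dx : Differentiable ℝ fx := cx.differentiable (by norm_num)
  have dxx := cxx.differentiable (by norm_num)
  have dxt : Differentiable ℝ fxt := cxt.differentiable (by norm_num)
  have eu : ∀ x t, u x t = f (x, t) := fun _ _ => rfl
  have ex : ∀ x t, deriv (fun y => u y t) x = fx (x, t) := fun x t => (hasDerivAt_fst du x t).deriv
  have et : ∀ x t, deriv (fun s => u x s) t = ft (x, t) := fun x t => (hasDerivAt_snd du x t).deriv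
  have exx : ∀ x t, deriv (fun y => fx (y, t)) x = dirDeriv (1, 0) fx (x, t) :=
    fun x t => (hasDerivAt_fst dx x t).deriv
  have exxt : ∀ x t, deriv (fun s => dirDeriv (1, 0) fx (x, s)) t
      = dirDeriv (1, 0) fxt (x, t) := fun x t => by
    rw [(hasDerivAt_snd dxx x t).deriv, dirDeriv_comm cx]
  simp only [ex, et, exx, exxt] at hbbm
  simp only [ex]
  congr 1
  refine integral_eq_of_conservation_law
    (ρ := fun x t => u x t ^ 2 + fx (x, t) ^ 2)
    (g := fun x t => 2 * (f (x, t) * ft (x, t) + fx (x, t) * fxt (x, t)))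
    (φ := fun x t => 2 * (f (x, t) * fxt (x, t)) - f (x, t) ^ 2 - 2 / 3 * f (x, t) ^ 3)
    ?_ ?_ ?_ ?_ ?_ s t
  · intro t
    have h1 := hu.continuous
    have h2 := cx.continuous
    exact ((h1.comp (by fun_prop : Continuous fun x : ℝ => (x, t))).pow 2).add
      ((h2.comp (by fun_prop)).pow 2)
  · have h1 := hu.continuous
    have h2 := cx.continuous
    have h3 := ct.continuous
    have h4 := cxt.continuous
    exact continuous_const.mul ((h1.mul h3).add (h2.mul h4))
  · intro x t
    refine (((hasDerivAt_snd du x t).pow 2).add ((hasDerivAt_snd dx x t).pow 2)).congr_deriv ?_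
    push_cast
    ring
  · intro x t
    have h1 := hasDerivAt_fst du x t
    have h2 := hasDerivAt_fst dxt x t
    refine ((((h1.mul h2).const_mul 2).sub (h1.pow 2)).sub
      ((h1.pow 3).const_mul (2 / 3))).congr_deriv ?_
    have h := hbbm x t
    rw [eu] at h
    push_cast
    linear_combination -2 * f (x, t) * h
  · intro t
    have hp : ∀ p, f (p + (2 * L, 0)) = f p := fun p => by simp [hf, hper]
    have hend : ((L, t) : ℝ × ℝ) = (-L, t) + (2 * L, 0) := by
      ext <;> simp <;> ring
    simp only [hend, hp, hfxt, hfx, dirDeriv_periodic (dirDeriv_periodic hp (1, 0))]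
end

section
/- Let L > 0 and let u : ℝ × ℝ → ℝ (written u(x,t)) be C³, 2L-periodic in x (u(x+2L, t) = u(x,t) for all x,t, together with all its spatial derivatives), and satisfy the Benjamin–Bona–Mahony equation u_t − u_{xxt} + u_x + u u_x = 0 for all (x,t). Then the Hamiltonian H²(t) = ½ ∫_{−L}^{L} ( u(x,t)² + (1/3) u(x,t)³ ) dx is constant in t. -/
/-!
Put `F = u + u²/2`, `v = u_t` and `G = F - v_x`. The BBM equation says `v - v_xx + F_x = 0`, once the
mixed derivatives are commuted (`u_xxt = v_xx`, valid since `u` is C³), that is `G_x = -v`. Hence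
`∂_t ½(u² + u³/3) = F v = (G + v_x) v = ∂_x ½(v² - G²)`,
so the density of `H²` obeys a local conservation law whose flux is `2L`-periodic in `x`. Its integral
over a period vanishes, and differentiation under the integral sign shows that `H²` has zero
derivative.
-/

open MeasureTheory intervalIntegral

/-- The derivative of `f` in the direction `e`, as a function on the plane; `e = (1, 0)` gives `∂_x`
and `e = (0, 1)` gives `∂_t`. -/
noncomputable def dirD (e : ℝ × ℝ) (f : ℝ × ℝ → ℝ) (p : ℝ × ℝ) : ℝ := fderiv ℝ f p e

lemma dirD_contDiff {n m : WithTop ℕ∞} {f : ℝ × ℝ → ℝ} (hf : ContDiff ℝ n f) (h : m + 1 ≤ n)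
    (e : ℝ × ℝ) : ContDiff ℝ m (dirD e f) :=
  (hf.fderiv_right h).clm_apply contDiff_const

lemma hasDerivAt_dirD_fst {f : ℝ × ℝ → ℝ} (hf : ContDiff ℝ 1 f) (x t : ℝ) :
    HasDerivAt (fun y => f (y, t)) (dirD (1, 0) f (x, t)) x :=
  ((hf.differentiable one_ne_zero (x, t)).hasFDerivAt).comp_hasDerivAt x
    ((hasDerivAt_id x).prodMk (hasDerivAt_const x t))

lemma hasDerivAt_dirD_snd {f : ℝ × ℝ → ℝ} (hf : ContDiff ℝ 1 f) (x t : ℝ) :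
    HasDerivAt (fun s => f (x, s)) (dirD (0, 1) f (x, t)) t :=
  ((hf.differentiable one_ne_zero (x, t)).hasFDerivAt).comp_hasDerivAt t
    ((hasDerivAt_const t x).prodMk (hasDerivAt_id t))

lemma dirD_comm {f : ℝ × ℝ → ℝ} (hf : ContDiff ℝ 2 f) (e e' : ℝ × ℝ) :
    dirD e (dirD e' f) = dirD e' (dirD e f) := by
  have hd : Differentiable ℝ (fderiv ℝ f) :=
    (hf.fderiv_right (m := 1) (by norm_num)).differentiable one_ne_zero
  have key : ∀ (a b p : ℝ × ℝ), dirD a (dirD b f) p = fderiv ℝ (fderiv ℝ f) p a b := by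
    intro a b p
    have h := ((hd p).hasFDerivAt.clm_apply (hasFDerivAt_const b p)).fderiv
    change fderiv ℝ (fun q => fderiv ℝ f q b) p a = _
    rw [h]
    simp
  funext p
  rw [key, key]
  exact (hf.contDiffAt.isSymmSndFDerivAt (by simp)).eq e e'

lemma dirD_periodic {f : ℝ × ℝ → ℝ} {a : ℝ × ℝ} (h : ∀ p, f (p + a) = f p) (e p : ℝ × ℝ) :
    dirD e f (p + a) = dirD e f p := by
  have h' : (fun q => f (q + a)) = f := funext h
  unfold dirD
  rw [← fderiv_comp_add_right, h']

/-- Differentiation under the integral sign for a C¹ integrand over a compact interval: the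
`t`-derivative is bounded on the compact rectangle `[a, b] × [t - 1, t + 1]`. -/
lemma hasDerivAt_integral_of_contDiff {f : ℝ × ℝ → ℝ} (hf : ContDiff ℝ 1 f) (a b t : ℝ) :
    HasDerivAt (fun s => ∫ x in a..b, f (x, s)) (∫ x in a..b, dirD (0, 1) f (x, t)) t := by
  have hc : Continuous (dirD (0, 1) f) := (dirD_contDiff (m := 0) hf (by norm_num) _).continuous
  obtain ⟨C, hC⟩ := ((isCompact_uIcc (a := a) (b := b)).prod
    (isCompact_Icc (a := t - 1) (b := t + 1))).exists_bound_of_continuousOn hc.continuousOn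
  refine (intervalIntegral.hasDerivAt_integral_of_dominated_loc_of_deriv_le
    (F := fun s x => f (x, s)) (F' := fun s x => dirD (0, 1) f (x, s)) (bound := fun _ => C)
    (s := Set.Icc (t - 1) (t + 1)) (Icc_mem_nhds (by linarith) (by linarith)) ?_ ?_ ?_ ?_ ?_ ?_).2
  · exact Filter.Eventually.of_forall fun s =>
      (hf.continuous.comp (by fun_prop : Continuous fun x : ℝ => (x, s))).aestronglyMeasurable
  · exact (hf.continuous.comp (by fun_prop : Continuous fun x : ℝ => (x, t))).intervalIntegrable _ _
  · exact (hc.comp (by fun_prop : Continuous fun x : ℝ => (x, t))).aestronglyMeasurable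
  · exact Filter.Eventually.of_forall fun x hx s hs => hC (x, s) ⟨Set.uIoc_subset_uIcc hx, hs⟩
  · exact intervalIntegrable_const
  · exact Filter.Eventually.of_forall fun x _ s _ => hasDerivAt_dirD_snd hf x s

/-- The integrand `(2u + u²) u_t` is `∂_t (u² + u³/3)`. By the equation it equals `∂_x (v² - G²)`
with `v = u_t` and `G = u + u²/2 - v_x`, so it integrates to zero over a period. -/
lemma integral_dirD_density_eq_zero (L : ℝ) (U : ℝ × ℝ → ℝ) (hU : ContDiff ℝ 3 U)
    (hper : ∀ p, U (p + (2 * L, 0)) = U p)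
    (hbbm : ∀ p, dirD (0, 1) U p - dirD (0, 1) (dirD (1, 0) (dirD (1, 0) U)) p
      + dirD (1, 0) U p + U p * dirD (1, 0) U p = 0) (t : ℝ) :
    ∫ x in (-L)..L, (2 * U (x, t) + U (x, t) ^ 2) * dirD (0, 1) U (x, t) = 0 := by
  have hU1 : ContDiff ℝ 1 U := hU.of_le (by norm_num)
  have hU2 : ContDiff ℝ 2 U := hU.of_le (by norm_num)
  have hUx : ContDiff ℝ 2 (dirD (1, 0) U) := dirD_contDiff hU (by norm_num) _
  have hv : ContDiff ℝ 2 (dirD (0, 1) U) := dirD_contDiff hU (by norm_num) _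
  have hv1 : ContDiff ℝ 1 (dirD (0, 1) U) := hv.of_le (by norm_num)
  have hvx : ContDiff ℝ 1 (dirD (1, 0) (dirD (0, 1) U)) := dirD_contDiff hv (by norm_num) _
  have hcomm : dirD (0, 1) (dirD (1, 0) (dirD (1, 0) U))
      = dirD (1, 0) (dirD (1, 0) (dirD (0, 1) U)) := by
    rw [dirD_comm hUx, dirD_comm hU2]
  rw [hcomm] at hbbm
  have hderiv : ∀ x : ℝ, HasDerivAt
      (fun y => dirD (0, 1) U (y, t) ^ 2
        - (U (y, t) + U (y, t) ^ 2 / 2 - dirD (1, 0) (dirD (0, 1) U) (y, t)) ^ 2)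
      ((2 * U (x, t) + U (x, t) ^ 2) * dirD (0, 1) U (x, t)) x := by
    intro x
    have h1 := hasDerivAt_dirD_fst hU1 x t
    have h2 := hasDerivAt_dirD_fst hv1 x t
    have h3 := hasDerivAt_dirD_fst hvx x t
    refine ((h2.pow 2).sub (((h1.add ((h1.pow 2).div_const 2)).sub h3).pow 2)).congr_deriv ?_
    have e := hbbm (x, t)
    simp only [Pi.add_apply, Pi.sub_apply, Pi.pow_apply]
    push_cast
    -- The difference of the two sides is a multiple of the BBM equation `G_x + v = 0`.
    linear_combination (-2 * (U (x, t) + U (x, t) ^ 2 / 2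
      - dirD (1, 0) (dirD (0, 1) U) (x, t))) * e
  have hcont : Continuous fun x : ℝ =>
      (2 * U (x, t) + U (x, t) ^ 2) * dirD (0, 1) U (x, t) := by
    have hUc := hU.continuous
    have hvc := hv.continuous
    fun_prop
  rw [integral_eq_sub_of_hasDerivAt (fun x _ => hderiv x) (hcont.intervalIntegrable _ _)]
  have hpt : ((-L, t) : ℝ × ℝ) + (2 * L, 0) = (L, t) := by
    ext <;> simp
    ring
  have p1 := hper (-L, t)
  have p2 := dirD_periodic hper (0, 1) (-L, t)
  have p3 := dirD_periodic (dirD_periodic hper (0, 1)) (1, 0) (-L, t)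
  rw [hpt] at p1 p2 p3
  rw [p1, p2, p3, sub_self]

/-- For a C³, `2L`-periodic (in `x`) solution `u` of the BBM equation
`u_t - u_{xxt} + u_x + u u_x = 0`, the Hamiltonian
`H²(t) = ½ ∫_{-L}^{L} (u² + (1/3) u³) dx` is constant in `t`. -/
theorem bbm_preserves_H2 (L : ℝ) (hL : 0 < L) (u : ℝ → ℝ → ℝ)
    (hu : ContDiff ℝ 3 (fun p : ℝ × ℝ => u p.1 p.2))
    (hper : ∀ x t : ℝ, u (x + 2 * L) t = u x t)
    (hbbm : ∀ x t : ℝ,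
      deriv (fun s => u x s) t
      - deriv (fun s => deriv (fun y => deriv (fun y' => u y' s) y) x) t
      + deriv (fun y => u y t) x
      + u x t * deriv (fun y => u y t) x = 0) :
    ∀ s t : ℝ,
      (1/2) * ∫ x in (-L)..L, ((u x s)^2 + (1/3) * (u x s)^3)
        = (1/2) * ∫ x in (-L)..L, ((u x t)^2 + (1/3) * (u x t)^3) := by
  obtain ⟨U, hUdef⟩ : ∃ U : ℝ × ℝ → ℝ, U = fun p => u p.1 p.2 := ⟨_, rfl⟩
  have hUu : ∀ x t, u x t = U (x, t) := fun x t => by rw [hUdef]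
  rw [← hUdef] at hu
  simp only [hUu] at hper hbbm ⊢
  have hU1 : ContDiff ℝ 1 U := hu.of_le (by norm_num)
  have hUx : ContDiff ℝ 2 (dirD (1, 0) U) := dirD_contDiff hu (by norm_num) _
  have hUx1 : ContDiff ℝ 1 (dirD (1, 0) U) := hUx.of_le (by norm_num)
  have hUxx : ContDiff ℝ 1 (dirD (1, 0) (dirD (1, 0) U)) := dirD_contDiff hUx (by norm_num) _
  have hperU : ∀ p, U (p + (2 * L, 0)) = U p := by
    rintro ⟨x, t⟩
    simpa using hper x t
  simp only [(hasDerivAt_dirD_fst hU1 _ _).deriv, (hasDerivAt_dirD_snd hU1 _ _).deriv,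
    (hasDerivAt_dirD_fst hUx1 _ _).deriv, (hasDerivAt_dirD_snd hUxx _ _).deriv] at hbbm
  have hdens : ContDiff ℝ 1 fun p => U p ^ 2 + (1 / 3) * U p ^ 3 := by fun_prop
  have hzero : ∀ t, HasDerivAt
      (fun s => ∫ x in (-L)..L, (U (x, s) ^ 2 + (1 / 3) * U (x, s) ^ 3)) 0 t := by
    intro t
    refine (hasDerivAt_integral_of_contDiff hdens (-L) L t).congr_deriv ?_
    refine Eq.trans ?_ (integral_dirD_density_eq_zero L U hu hperU (fun p => hbbm p.1 p.2) t)
    congr 1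
    funext x
    have h := hasDerivAt_dirD_snd hU1 x t
    refine (hasDerivAt_dirD_snd hdens x t).unique
      (((h.pow 2).add ((h.pow 3).const_mul (1 / 3))).congr_deriv ?_)
    push_cast
    ring
  intro s t
  rw [is_const_of_deriv_eq_zero (fun r => (hzero r).differentiableAt) (fun r => (hzero r).deriv) s t]
end
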